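/- Let u† ∈ U. Then for every w ∈ U with A w = Q(A u†) one has R w = R u†; that is, the minimum-norm solution of the equation projected onto Y_n in the image space and the exact solution u† differ only on the orthogonal complement of A*(Y_n). -/

import Mathlib

/-!
For a formal adjoint `B` of `A`, the identity `⟪B y, u⟫ = ⟪y, A u⟫` gives `(B(K))ᗮ = A⁻¹(Kᗮ)`.
If `A w` is the orthogonal projection of `A u` onto `K`, then `A (u - w) ∈ Kᗮ`, so `u - w` lies in
`(B(K))ᗮ`, which the orthogonal projection onto `B(K)` annihilates.
-/

open scoped InnerProductSpace

section Projection

variable {𝕜 E : Type*} [RCLike 𝕜] [NormedAddCommGroup E] [InnerProductSpace 𝕜 E]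
  {K : Submodule 𝕜 E} {P : E → E}

/-- `P` is the orthogonal projection onto `K`: every `x` splits as `P x ∈ K` plus `x - P x ∈ Kᗮ`.
An unbundled counterpart of `Submodule.starProjection`, for a map `P` that is given in advance. -/
def IsOrthogonalProjectionOnto (K : Submodule 𝕜 E) (P : E → E) : Prop :=
  ∀ x, P x ∈ K ∧ x - P x ∈ Kᗮ

theorem IsOrthogonalProjectionOnto.eq_of_sub_mem_orthogonal (hP : IsOrthogonalProjectionOnto K P)
    {x y : E} (hxy : x - y ∈ Kᗮ) : P x = P y := by
  have h_mem : P x - P y ∈ K := K.sub_mem (hP x).1 (hP y).1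
  have h_orth : P x - P y ∈ Kᗮ := by
    have h_eq : P x - P y = (x - y) - ((x - P x) - (y - P y)) := by abel
    rw [h_eq]
    exact Kᗮ.sub_mem hxy (Kᗮ.sub_mem (hP x).2 (hP y).2)
  exact sub_eq_zero.mp (Submodule.disjoint_def.mp K.orthogonal_disjoint _ h_mem h_orth)

end Projection

section FormalAdjoint

variable {𝕜 U Y : Type*} [RCLike 𝕜] [NormedAddCommGroup U] [InnerProductSpace 𝕜 U]
  [NormedAddCommGroup Y] [InnerProductSpace 𝕜 Y] {A : U →ₗ[𝕜] Y} {B : Y →ₗ[𝕜] U}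

theorem orthogonal_map_eq_comap_orthogonal (hAB : ∀ u y, ⟪B y, u⟫_𝕜 = ⟪y, A u⟫_𝕜)
    (K : Submodule 𝕜 Y) : (K.map B)ᗮ = Kᗮ.comap A := by
  ext u
  simp only [Submodule.mem_orthogonal, Submodule.mem_comap, Submodule.mem_map,
    forall_exists_index, and_imp, forall_apply_eq_imp_iff₂, hAB]

theorem projected_solution_agrees_on_adjoint_subspace_general
    (hAB : ∀ u y, ⟪B y, u⟫_𝕜 = ⟪y, A u⟫_𝕜) {K : Submodule 𝕜 Y}
    {Q : Y → Y} (hQ : IsOrthogonalProjectionOnto K Q)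
    {R : U → U} (hR : IsOrthogonalProjectionOnto (K.map B) R)
    {u w : U} (hw : A w = Q (A u)) : R w = R u := by
  have h_sub : u - w ∈ (K.map B)ᗮ := by
    rw [orthogonal_map_eq_comap_orthogonal hAB, Submodule.mem_comap, map_sub, hw]
    exact (hQ (A u)).2
  exact (hR.eq_of_sub_mem_orthogonal h_sub).symm

end FormalAdjoint

/-- Let `U`, `Y` be real Hilbert spaces, `A : U → Y` an injective bounded linear operator
with adjoint `A*`, `Yₙ` a finite-dimensional subspace of `Y` contained in the range
of `A` with orthogonal projection `Q`, and `Z = A*(Yₙ)` with orthogonal projection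
`R`.  Let `uex ∈ U`.  Then for every `w ∈ U` with `A w = Q (A uex)` one has
`R w = R uex`: the minimum-norm solution of the projected equation and the exact
solution differ only on the orthogonal complement of `A*(Yₙ)`. -/
theorem projected_solution_agrees_on_adjoint_subspace
    {U Y : Type*} [NormedAddCommGroup U] [InnerProductSpace ℝ U] [CompleteSpace U]
    [NormedAddCommGroup Y] [InnerProductSpace ℝ Y] [CompleteSpace Y]
    (A : U →L[ℝ] Y) (hA : Function.Injective A)
    (Yn : Submodule ℝ Y) (hYn : FiniteDimensional ℝ Yn)
    (hYnA : (Yn : Set Y) ⊆ Set.range A)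
    (Q : Y →L[ℝ] Y)
    (hQ : ∀ z : Y, Q z ∈ Yn ∧ z - Q z ∈ Ynᗮ)
    (R : U →L[ℝ] U)
    (hR : ∀ x : U,
      R x ∈ Yn.map ((ContinuousLinearMap.adjoint A : Y →L[ℝ] U) : Y →ₗ[ℝ] U) ∧
      x - R x ∈ (Yn.map ((ContinuousLinearMap.adjoint A : Y →L[ℝ] U) : Y →ₗ[ℝ] U))ᗮ)
    (uex : U) :
    ∀ w : U, A w = Q (A uex) → R w = R uex := by
  intro w hw
  exact projected_solution_agrees_on_adjoint_subspace_general A.adjoint_inner_left hQ hR hw
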